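/- arXiv:1011.3654 — 2 statements merged into one kernel-verified Lean document; each statement's English description precedes it below -/
import Mathlib

section
/- Suppose q ≠ 0 and d, d' ∈ ℕ^ℓ satisfy |d| ≠ |d'|. If a polynomial f ∈ K[X] satisfies D_{q,d} f = 0 and D_{q,d'} f = 0, then D_{q,d+d'} f = 0. -/
open MvPolynomial

/-- The operator `∂_j^d = ∂_{1j}^{d 1} ⋯ ∂_{ℓj}^{d ℓ}` on `K[X]`,
`X` an `ℓ × n` matrix of variables. -/
noncomputable def pdj {K : Type*} [Field K] {ℓ n : ℕ} (d : Fin ℓ → ℕ) (j : Fin n) :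
    Module.End K (MvPolynomial (Fin ℓ × Fin n) K) :=
  ((List.finRange ℓ).map fun i =>
    ((pderiv (i, j)).toLinearMap : Module.End K (MvPolynomial (Fin ℓ × Fin n) K)) ^ d i).prod

/-- The deformed operator
`D_{q,d} = ∑_j (1 + q (x_{1j}∂_{1j} + ⋯ + x_{ℓj}∂_{ℓj})) ∘ ∂_j^d` on `K[X]`. -/
noncomputable def Dq {K : Type*} [Field K] (ℓ n : ℕ) (q : K) (d : Fin ℓ → ℕ) :
    Module.End K (MvPolynomial (Fin ℓ × Fin n) K) :=
  ∑ j : Fin n,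
    (1 + q • ∑ i : Fin ℓ,
        (LinearMap.mulLeft K (X (i, j)) * (pderiv (i, j)).toLinearMap)) * pdj d j


section helpers
variable {K : Type*} [Field K] {ℓ n : ℕ}

/-- The partial derivative as an endomorphism. -/
noncomputable def hpd (K : Type*) [Field K] {ℓ n : ℕ} (a : Fin ℓ × Fin n) :
    Module.End K (MvPolynomial (Fin ℓ × Fin n) K) := (pderiv a).toLinearMap

/-- The column Euler derivation. -/
noncomputable def hEd (K : Type*) [Field K] (ℓ : ℕ) {n : ℕ} (k : Fin n) :
    Derivation K (MvPolynomial (Fin ℓ × Fin n) K) (MvPolynomial (Fin ℓ × Fin n) K) :=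
  ∑ i : Fin ℓ, (X (i, k) : MvPolynomial (Fin ℓ × Fin n) K) • pderiv (i, k)

/-- The column Euler operator. -/
noncomputable def hE (K : Type*) [Field K] (ℓ : ℕ) {n : ℕ} (k : Fin n) :
    Module.End K (MvPolynomial (Fin ℓ × Fin n) K) :=
  ∑ i : Fin ℓ, (LinearMap.mulLeft K (X (i, k)) * (pderiv (i, k)).toLinearMap)

lemma hEd_apply (k : Fin n) (f : MvPolynomial (Fin ℓ × Fin n) K) :
    hEd K ℓ k f = hE K ℓ k f := by
  have h : hEd K ℓ k f = Derivation.coeFnAddMonoidHom (hEd K ℓ k) f := rfl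
  rw [h, hEd, map_sum]
  simp [hE, LinearMap.sum_apply, Finset.sum_apply, Derivation.coeFnAddMonoidHom]

lemma hEd_X (k : Fin n) (a : Fin ℓ × Fin n) :
    hEd K ℓ k (X a) = if a.2 = k then X a else 0 := by
  rw [hEd_apply]
  obtain ⟨i, j⟩ := a
  simp only [hE, LinearMap.sum_apply, Module.End.mul_apply, LinearMap.mulLeft_apply,
    Derivation.coeFn_coe, pderiv_X]
  by_cases h : j = k
  · subst h
    rw [Finset.sum_eq_single i]
    · simp
    · intro b _ hb
      simp [Pi.single_apply, hb.symm]
    · simp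
  · simp [Pi.single_apply, h]

lemma hpd_comm (a b : Fin ℓ × Fin n) : Commute (hpd K a) (hpd K b) := by
  have h : ⁅(pderiv a : Derivation K (MvPolynomial (Fin ℓ × Fin n) K) (MvPolynomial (Fin ℓ × Fin n) K)),
      (pderiv b : Derivation K (MvPolynomial (Fin ℓ × Fin n) K) (MvPolynomial (Fin ℓ × Fin n) K))⁆ = 0 := by
    apply MvPolynomial.derivation_ext
    intro i
    simp only [Derivation.commutator_apply, pderiv_X, Derivation.zero_apply, Pi.single_apply]
    split_ifs <;> simp
  refine LinearMap.ext fun f => ?_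
  have := DFunLike.congr_fun h f
  rw [Derivation.commutator_apply] at this
  exact sub_eq_zero.mp this

lemma hE_comm (j k : Fin n) : Commute (hE K ℓ j) (hE K ℓ k) := by
  have h : ⁅hEd K ℓ j, hEd K ℓ k⁆ = 0 := by
    apply MvPolynomial.derivation_ext
    intro i
    simp only [Derivation.commutator_apply, hEd_X, Derivation.zero_apply]
    rw [apply_ite (hEd K ℓ j), apply_ite (hEd K ℓ k), hEd_X, hEd_X, map_zero, map_zero]
    split_ifs <;> simp
  refine LinearMap.ext fun f => ?_
  have := DFunLike.congr_fun h f
  simp only [Derivation.commutator_apply, hEd_apply] at this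
  exact sub_eq_zero.mp this

lemma hpd_hE (a : Fin ℓ × Fin n) (k : Fin n) :
    hpd K a * hE K ℓ k = hE K ℓ k * hpd K a + (if a.2 = k then 1 else 0 : ℕ) • hpd K a := by
  have h : ⁅(pderiv a : Derivation K (MvPolynomial (Fin ℓ × Fin n) K) (MvPolynomial (Fin ℓ × Fin n) K)), hEd K ℓ k⁆
      = (if a.2 = k then 1 else 0 : ℕ) • pderiv a := by
    apply MvPolynomial.derivation_ext
    intro i
    simp only [Derivation.commutator_apply, hEd_X, pderiv_X, Derivation.smul_apply,
      Pi.single_apply]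
    by_cases h1 : a = i
    · subst h1
      split_ifs <;> simp at *
    · have h2 : i ≠ a := fun h => h1 h.symm
      split_ifs <;> simp [pderiv_X, Pi.single_apply, h1, h2] at *
  refine LinearMap.ext fun f => ?_
  have := DFunLike.congr_fun h f
  simp only [Derivation.commutator_apply, hEd_apply, Derivation.smul_apply] at this
  exact sub_eq_iff_eq_add'.mp this

lemma shift_mul {R : Type*} [Ring R] {P P' E : R} {c c' : ℕ}
    (h : P * E = E * P + c • P) (h' : P' * E = E * P' + c' • P') :
    (P * P') * E = E * (P * P') + (c + c') • (P * P') := by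
  rw [mul_assoc, h', mul_add, ← mul_assoc, h, add_mul, mul_smul_comm, smul_mul_assoc, add_smul,
    mul_assoc, add_assoc]

lemma shift_pow {R : Type*} [Ring R] {P E : R} {c : ℕ}
    (h : P * E = E * P + c • P) (m : ℕ) :
    P ^ m * E = E * P ^ m + (m * c) • P ^ m := by
  induction m with
  | zero => simp
  | succ m ih =>
    rw [pow_succ, shift_mul ih h]
    congr 2
    ring

lemma pdj_eq (d : Fin ℓ → ℕ) (j : Fin n) :
    pdj (K := K) d j = ((List.finRange ℓ).map fun i => hpd K (i, j) ^ d i).prod := rfl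

lemma pdj_comm (d d' : Fin ℓ → ℕ) (j k : Fin n) :
    Commute (pdj (K := K) d j) (pdj d' k) := by
  rw [pdj_eq, pdj_eq]
  apply Commute.list_prod_left
  intro x hx
  apply Commute.list_prod_right
  intro y hy
  simp only [List.mem_map] at hx hy
  obtain ⟨a, -, rfl⟩ := hx
  obtain ⟨b, -, rfl⟩ := hy
  exact (hpd_comm _ _).pow_pow _ _

lemma pdj_add (d d' : Fin ℓ → ℕ) (j : Fin n) :
    pdj (K := K) (d + d') j = pdj d j * pdj d' j := by
  simp only [pdj_eq]
  generalize List.finRange ℓ = L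
  induction L with
  | nil => simp
  | cons a L ih =>
    simp only [List.map_cons, List.prod_cons]
    rw [ih, Pi.add_apply, pow_add]
    have : Commute (hpd K (a, j) ^ d' a) (L.map fun i => hpd K (i, j) ^ d i).prod := by
      apply Commute.list_prod_right
      intro y hy
      simp only [List.mem_map] at hy
      obtain ⟨b, -, rfl⟩ := hy
      exact (hpd_comm _ _).pow_pow _ _
    simp only [mul_assoc]
    congr 1
    simp only [← mul_assoc]
    rw [this.eq]

lemma pdj_hE (d : Fin ℓ → ℕ) (j k : Fin n) :
    pdj d j * hE K ℓ k = hE K ℓ k * pdj d j + (if j = k then ∑ i, d i else 0 : ℕ) • pdj d j := by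
  have key : ∀ L : List (Fin ℓ), (L.map fun i => hpd K (i, j) ^ d i).prod * hE K ℓ k
      = hE K ℓ k * (L.map fun i => hpd K (i, j) ^ d i).prod
        + (L.map fun i => d i * (if j = k then 1 else 0)).sum •
          (L.map fun i => hpd K (i, j) ^ d i).prod := by
    intro L
    induction L with
    | nil => simp
    | cons a L ih =>
      simp only [List.map_cons, List.prod_cons, List.sum_cons]
      exact shift_mul (shift_pow (hpd_hE (a, j) k) _) ih
  rw [pdj_eq, key]
  congr 2
  rw [← List.ofFn_eq_map, List.sum_ofFn]
  split_ifs <;> simp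

lemma Dq_eq (q : K) (d : Fin ℓ → ℕ) :
    Dq ℓ n q d = ∑ j : Fin n, (1 + q • hE K ℓ j) * pdj d j := rfl

lemma abs_comm {R : Type*} [Ring R] [Algebra K R] {P P' A A' : R} {c c' : K}
    (h : P * A' = A' * P + c • P) (h' : P' * A = A * P' + c' • P')
    (hA : A * A' = A' * A) (hP : P * P' = P' * P) :
    A * P * (A' * P') - A' * P' * (A * P) = c • (A * (P * P')) - c' • (A' * (P * P')) := by
  have L : A * P * (A' * P') = A * A' * (P * P') + c • (A * (P * P')) := by
    rw [mul_assoc, ← mul_assoc P, h, add_mul, mul_add, smul_mul_assoc, mul_smul_comm]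
    simp only [mul_assoc]
  have L' : A' * P' * (A * P) = A' * A * (P' * P) + c' • (A' * (P' * P)) := by
    rw [mul_assoc, ← mul_assoc P', h', add_mul, mul_add, smul_mul_assoc, mul_smul_comm]
    simp only [mul_assoc]
  rw [L, L', hA, hP, add_sub_add_left_eq_sub]

lemma term_comm (q : K) (d d' : Fin ℓ → ℕ) (j k : Fin n) :
    ((1 + q • hE K ℓ j) * pdj d j) * ((1 + q • hE K ℓ k) * pdj d' k)
      - ((1 + q • hE K ℓ k) * pdj d' k) * ((1 + q • hE K ℓ j) * pdj d j)
    = if j = k then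
        (q * (((∑ i, d i : ℕ) : K) - ((∑ i, d' i : ℕ) : K))) •
          ((1 + q • hE K ℓ j) * pdj (d + d') j) else 0 := by
  have hc := (pdj_comm (K := K) d d' j k).eq
  have hEE := (hE_comm (K := K) (ℓ := ℓ) j k).eq
  have h1 := pdj_hE (K := K) d j k
  have h2 := pdj_hE (K := K) d' k j
  have A : pdj d j * (1 + q • hE K ℓ k) = (1 + q • hE K ℓ k) * pdj d j
      + (q * ((if j = k then ∑ i, d i else 0 : ℕ) : K)) • pdj d j := by
    rw [mul_add, add_mul, mul_smul_comm, h1, smul_mul_assoc, smul_add, mul_one, one_mul,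
      add_assoc, mul_smul, Nat.cast_smul_eq_nsmul]
  have B : pdj d' k * (1 + q • hE K ℓ j) = (1 + q • hE K ℓ j) * pdj d' k
      + (q * ((if k = j then ∑ i, d' i else 0 : ℕ) : K)) • pdj d' k := by
    rw [mul_add, add_mul, mul_smul_comm, h2, smul_mul_assoc, smul_add, mul_one, one_mul,
      add_assoc, mul_smul, Nat.cast_smul_eq_nsmul]
  have C : (1 + q • hE K ℓ j) * (1 + q • hE K ℓ k)
      = (1 + q • hE K ℓ k) * (1 + q • hE K ℓ j) := by
    have : Commute (1 + q • hE K ℓ j) (1 + q • hE K ℓ k) :=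
      (Commute.one_left _).add_left
        (((Commute.one_right _).add_right (((hE_comm j k).smul_left q).smul_right q)))
    exact this.eq
  rw [abs_comm A B C hc]
  by_cases h : j = k
  · subst h
    rw [pdj_add]
    simp only [if_true]
    rw [mul_sub]
    exact (sub_smul _ _ _).symm
  · have h' : ¬ k = j := fun e => h e.symm
    simp [h, h']

lemma Dq_comm (q : K) (d d' : Fin ℓ → ℕ) :
    Dq ℓ n q d * Dq ℓ n q d' - Dq ℓ n q d' * Dq ℓ n q d
      = (q * (((∑ i, d i : ℕ) : K) - ((∑ i, d' i : ℕ) : K))) • Dq ℓ n q (d + d') := by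
  have e : Dq ℓ n q d' * Dq ℓ n q d = ∑ j : Fin n, ∑ k : Fin n,
      ((1 + q • hE K ℓ k) * pdj d' k) * ((1 + q • hE K ℓ j) * pdj d j) := by
    rw [Dq_eq, Dq_eq, Finset.sum_mul_sum, Finset.sum_comm]
  rw [e, Dq_eq, Dq_eq, Dq_eq, Finset.sum_mul_sum, ← Finset.sum_sub_distrib, Finset.smul_sum]
  refine Finset.sum_congr rfl fun j _ => ?_
  rw [← Finset.sum_sub_distrib]
  simp only [term_comm]
  simp

end helpers

/-- If `|d| ≠ |d'|` and `q ≠ 0`, a common kernel element of `D_{q,d}` and `D_{q,d'}`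
is killed by `D_{q,d+d'}`. -/
theorem deformed_operator_kernel_add {K : Type*} [Field K] [CharZero K] {ℓ n : ℕ}
    (hℓ : 1 ≤ ℓ) (hn : 1 ≤ n) (q : K) (hq : q ≠ 0) (d d' : Fin ℓ → ℕ)
    (hdd : (∑ i, d i) ≠ ∑ i, d' i) (f : MvPolynomial (Fin ℓ × Fin n) K)
    (hd : Dq ℓ n q d f = 0) (hd' : Dq ℓ n q d' f = 0) :
    Dq ℓ n q (d + d') f = 0 := by
  have h := DFunLike.congr_fun (Dq_comm (n := n) q d d') f
  simp only [LinearMap.sub_apply, Module.End.mul_apply, LinearMap.smul_apply, hd, hd', map_zero,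
    sub_zero] at h
  refine (smul_eq_zero.mp h.symm).resolve_left ?_
  refine mul_ne_zero hq (sub_ne_zero.mpr ?_)
  exact fun e => hdd (Nat.cast_injective e)
end

section
/- Let m ≥ 1 and let r ≥ 1 be a divisor of m. Let φ̄_r : K[x_1,…,x_n] → K[x_1,…,x_n] be the linear map sending each monomial x^a (a ∈ ℕ^n) to (a_1!⋯a_n!/((ra_1)!⋯(ra_n)!))·x^{ra}. If f ∈ K[x_1,…,x_n] satisfies D_{q,k} f = 0 for every integer k ≥ 1 (i.e., f is q-harmonic for the symmetric group S_n), then for every positive multiple k of m one has Σ_{j=1}^n (r + q·x_j∂_{x_j}) ∂_{x_j}^{k} (φ̄_r f) = 0; that is, φ̄_r f is (q/r)-harmonic for G(m,n). -/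
open MvPolynomial

/-- The deformed operator `D_{q,k} = ∑_j (1 + q x_j ∂_j) ∘ ∂_j^k` on `K[x_1,…,x_n]`. -/
noncomputable def Dq1 {K : Type*} [Field K] (n : ℕ) (q : K) (k : ℕ) :
    Module.End K (MvPolynomial (Fin n) K) :=
  ∑ j : Fin n,
    (1 + q • (LinearMap.mulLeft K (X j) * (pderiv j).toLinearMap)) *
      ((pderiv j).toLinearMap : Module.End K (MvPolynomial (Fin n) K)) ^ k

theorem pderiv_pow_monomial_aux {K : Type*} [Field K] {n : ℕ} (j : Fin n) (k : ℕ)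
    (b : Fin n →₀ ℕ) (c : K) :
    (((pderiv j).toLinearMap : Module.End K (MvPolynomial (Fin n) K)) ^ k) (monomial b c)
      = monomial (b - Finsupp.single j k) (c * ((b j).descFactorial k : K)) := by
  induction k with
  | zero => simp
  | succ k ih =>
    rw [pow_succ', Module.End.mul_apply, ih]
    have h1 : b - Finsupp.single j k - Finsupp.single j 1 = b - Finsupp.single j (k + 1) := by
      rw [tsub_tsub, ← Finsupp.single_add]
    have h2 : (b - Finsupp.single j k) j = b j - k := by simp
    rw [Derivation.coeFn_coe, pderiv_monomial, h1, h2,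
      Nat.descFactorial_succ]
    congr 1
    push_cast
    ring

theorem prod_update_aux {n : ℕ} (F : ℕ → ℕ) (j : Fin n) (b : Fin n →₀ ℕ) (d : ℕ)
    (h : F (b j + 1) = d * F (b j)) :
    ∏ i, F ((b + Finsupp.single j 1 : Fin n →₀ ℕ) i) = d * ∏ i, F (b i) := by
  rw [← Finset.mul_prod_erase _ _ (Finset.mem_univ j),
    ← Finset.mul_prod_erase _ (fun i => F (b i)) (Finset.mem_univ j), ← mul_assoc, ← h]
  congr 1
  · simp
  · refine Finset.prod_congr rfl fun i hi => ?_
    have : j ≠ i := (Finset.ne_of_mem_erase hi).symm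
    simp [Finsupp.single_apply, this]

theorem commA_aux {K : Type*} [Field K] [CharZero K] {n : ℕ} (r : ℕ) (hr : 1 ≤ r)
    (φ : MvPolynomial (Fin n) K →ₗ[K] MvPolynomial (Fin n) K)
    (hφ : ∀ a : Fin n →₀ ℕ,
      φ (monomial a 1)
        = (((∏ j, (a j).factorial : ℕ) : K) / ((∏ j, (r * a j).factorial : ℕ) : K)) •
            monomial (r • a) 1) (j : Fin n) :
    ((pderiv j).toLinearMap : Module.End K (MvPolynomial (Fin n) K)) ^ r * φ
      = φ * (pderiv j).toLinearMap := by
  refine (basisMonomials (Fin n) K).ext fun a => ?_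
  simp only [coe_basisMonomials, Module.End.mul_apply]
  rw [hφ, map_smul, pderiv_pow_monomial_aux,
    Derivation.coeFn_coe, pderiv_monomial]
  have h0 : ∀ (b : Fin n →₀ ℕ) (c : K), monomial b c = c • monomial b (1 : K) := by
    intro b c; simp [smul_monomial]
  rw [h0 _ (1 * (((r • a) j).descFactorial r : K)), h0 _ (1 * (a j : K)), map_smul, hφ,
    smul_smul, smul_smul]
  have h1 : r • a - Finsupp.single j r = r • (a - Finsupp.single j 1) := by
    ext i
    by_cases h : j = i
    · subst h; simp [Nat.mul_sub]
    · simp [Finsupp.single_apply, h]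
  rw [h1]
  congr 1
  by_cases ha : a j = 0
  · have : Nat.descFactorial 0 r = 0 := Nat.descFactorial_eq_zero_iff_lt.2 hr
    simp [ha, this]
  · obtain ⟨b, rfl⟩ : ∃ b, a = b + Finsupp.single j 1 :=
      ⟨a - Finsupp.single j 1, (tsub_add_cancel_of_le (by simpa using Nat.one_le_iff_ne_zero.2 ha)).symm⟩
    rw [add_tsub_cancel_right]
    rw [prod_update_aux (fun x => x.factorial) j b (b j + 1) (Nat.factorial_succ _),
      prod_update_aux (fun x => (r * x).factorial) j b ((r * (b j + 1)).descFactorial r) (by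
        have := Nat.factorial_mul_descFactorial (n := r * (b j + 1)) (k := r) (by nlinarith)
        rw [← this, mul_comm]; congr 2; rw [mul_add, mul_one, Nat.add_sub_cancel])]
    have hd : (((r * (b j + 1)).descFactorial r : ℕ) : K) ≠ 0 := by
      rw [Nat.cast_ne_zero, Ne, Nat.descFactorial_eq_zero_iff_lt]
      nlinarith
    have hp : ((∏ i, (r * b i).factorial : ℕ) : K) ≠ 0 := by
      rw [Nat.cast_ne_zero]
      exact Finset.prod_ne_zero_iff.2 fun i _ => Nat.factorial_ne_zero _
    have e : (r • (b + Finsupp.single j 1 : Fin n →₀ ℕ)) j = r * (b j + 1) := by simp [mul_add]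
    have e' : (b + Finsupp.single j 1 : Fin n →₀ ℕ) j = b j + 1 := by simp
    rw [e, e', Nat.cast_mul, Nat.cast_mul]
    field_simp

theorem commB_aux {K : Type*} [Field K] {n : ℕ} (r : ℕ)
    (φ : MvPolynomial (Fin n) K →ₗ[K] MvPolynomial (Fin n) K)
    (hφ : ∀ a : Fin n →₀ ℕ, ∃ c : K, φ (monomial a 1) = c • monomial (r • a) 1) (j : Fin n) :
    LinearMap.mulLeft K (X j) * (pderiv j).toLinearMap * φ
      = (r : K) • (φ * (LinearMap.mulLeft K (X j) * (pderiv j).toLinearMap)) := by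
  have h0 : ∀ a : Fin n →₀ ℕ, X j * pderiv j (monomial a (1 : K)) = (a j : K) • monomial a 1 := by
    intro a
    rw [X_mul_pderiv_monomial, Nat.cast_smul_eq_nsmul]
  refine (basisMonomials (Fin n) K).ext fun a => ?_
  obtain ⟨c, hc⟩ := hφ a
  simp only [coe_basisMonomials, Module.End.mul_apply, LinearMap.smul_apply,
    Derivation.coeFn_coe, LinearMap.mulLeft_apply]
  rw [hc, h0, Derivation.map_smul, map_smul, mul_smul_comm, h0, hc]
  simp only [smul_smul]
  congr 1
  simp
  ring

/-- Inflating a `q`-harmonic polynomial for `S_n` by `φ̄_r` (with `r ∣ m`) yields a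
`(q/r)`-harmonic polynomial for `G(m,n)`:
`∑_j (r + q x_j∂_j) ∂_j^k (φ̄_r f) = 0` for every positive multiple `k` of `m`. -/
theorem inflate_qHarmonic {K : Type*} [Field K] [CharZero K] {n : ℕ} (hn : 1 ≤ n)
    (q : K) (m r : ℕ) (hm : 1 ≤ m) (hr : 1 ≤ r) (hrm : r ∣ m)
    (φ : MvPolynomial (Fin n) K →ₗ[K] MvPolynomial (Fin n) K)
    (hφ : ∀ a : Fin n →₀ ℕ,
      φ (monomial a 1)
        = (((∏ j, (a j).factorial : ℕ) : K) / ((∏ j, (r * a j).factorial : ℕ) : K)) •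
            monomial (r • a) 1)
    (f : MvPolynomial (Fin n) K) (hf : ∀ k : ℕ, 1 ≤ k → Dq1 n q k f = 0) :
    ∀ k : ℕ, (∃ t : ℕ, 0 < t ∧ k = m * t) →
      ∑ j : Fin n,
          ((r : K) • ((((pderiv j).toLinearMap :
                Module.End K (MvPolynomial (Fin n) K)) ^ k) (φ f))
            + q • (X j * pderiv j ((((pderiv j).toLinearMap :
                Module.End K (MvPolynomial (Fin n) K)) ^ k) (φ f)))) = 0 := by
  rintro k ⟨t, ht, rfl⟩
  obtain ⟨u, rfl⟩ := hrm
  have hs : 1 ≤ u * t := Nat.mul_pos (Nat.pos_of_ne_zero (by rintro rfl; simp at hm)) ht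
  have hA : ∀ j : Fin n,
      (((pderiv j).toLinearMap : Module.End K (MvPolynomial (Fin n) K)) ^ (r * u * t)) (φ f)
        = φ ((((pderiv j).toLinearMap : Module.End K (MvPolynomial (Fin n) K)) ^ (u * t)) f) := by
    intro j
    have h : SemiconjBy φ ((pderiv j).toLinearMap : Module.End K (MvPolynomial (Fin n) K))
        (((pderiv j).toLinearMap : Module.End K (MvPolynomial (Fin n) K)) ^ r) :=
      (commA_aux r hr φ hφ j).symm
    have h2 := (h.pow_right (u * t)).eq
    rw [← pow_mul, ← mul_assoc] at h2
    exact (LinearMap.congr_fun h2 f).symm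
  have hB : ∀ (j : Fin n) (g : MvPolynomial (Fin n) K),
      X j * pderiv j (φ g) = (r : K) • φ (X j * pderiv j g) := fun j g =>
    LinearMap.congr_fun (commB_aux r φ (fun a => ⟨_, hφ a⟩) j) g
  have hD := congrArg (fun g => (r : K) • φ g) (hf _ hs)
  simp only [map_zero, smul_zero] at hD
  rw [← hD, Dq1, LinearMap.sum_apply, map_sum, Finset.smul_sum]
  refine Finset.sum_congr rfl fun j _ => ?_
  rw [hA, hB]
  simp only [Module.End.mul_apply, LinearMap.add_apply, LinearMap.smul_apply,
    Module.End.one_apply, map_add, map_smul, smul_add, LinearMap.mulLeft_apply,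
    Derivation.coeFn_coe]
  rw [smul_comm q (r : K)]
end
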